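/- Let d ≥ 2, let f, h : [−1,1] → ℝ be continuous, suppose h is positive definite on S^{d-1}, and suppose h(t) ≤ f(t) for all t ∈ [−1,1]. Then for every Borel probability measure μ on S^{d-1}, I_f(μ) ≥ ∫∫ h(⟨x,y⟩) dσ(x)dσ(y). -/

import Mathlib

/-!
Write `K(x,y) = h⟨x,y⟩` and `J(μ,ν) = ∫∫ K dμ dν`. Two facts give the bound.

* Positive definiteness passes from finite sums to measures: the quadratic form `J` is nonnegative
  on the difference `μ - ν` of two probability measures, i.e.
  `J(μ,μ) - 2 J(μ,ν) + J(ν,ν) ≥ 0` (`two_mul_integral_le`). The measures are discretised by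
  pushing them forward along finitely-valued maps converging pointwise to the identity; for the
  pushed-forward measures the inequality is a finite sum, and dominated convergence concludes.
* The potential `x ↦ ∫ K(x,y) dσ(y)` is constant, because `σ` is invariant under linear isometries
  (`measurePreserving_sphσ`) and reflections act transitively on the sphere
  (`potential_const`).

Hence `J(μ,σ) = J(σ,σ)`, so `J(μ,μ) ≥ J(σ,σ)`, and `h ≤ f` gives `I_f(μ) ≥ J(μ,μ)`.
-/

open MeasureTheory Metric
open scoped RealInnerProductSpace

noncomputable section

/-- The unit sphere `S^{d-1}` in `ℝ^d` with the standard inner product. -/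
abbrev Sph (d : ℕ) := Metric.sphere (0 : EuclideanSpace ℝ (Fin d)) 1

/-- The uniform (rotation-invariant) Borel probability measure `σ` on the sphere
`S^{d-1}`, obtained by normalizing the canonical measure on the unit sphere induced
by the Lebesgue measure. -/
def sphσ (d : ℕ) : Measure (Sph d) :=
  (((volume : Measure (EuclideanSpace ℝ (Fin d))).toSphere) Set.univ)⁻¹ •
    ((volume : Measure (EuclideanSpace ℝ (Fin d))).toSphere)

variable {d : ℕ}

/-- The energy integral `I_f(μ) = ∫∫ f (⟨x,y⟩) dμ(x) dμ(y)` of a Borel measure `μ`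
on the sphere `S^{d-1}`. -/
def energy (f : ℝ → ℝ) (μ : Measure (Sph d)) : ℝ :=
  ∫ x, ∫ y, f ⟪(x : EuclideanSpace ℝ (Fin d)), (y : EuclideanSpace ℝ (Fin d))⟫ ∂μ ∂μ

/-- The uniform probability measure `(1/|C|) ∑_{x ∈ C} δ_x` on a finite set
`C ⊆ S^{d-1}`. -/
def unifOn (C : Finset (Sph d)) : Measure (Sph d) :=
  (C.card : ENNReal)⁻¹ • ∑ x ∈ C, Measure.dirac x

/-- Evaluation of a polynomial in `d` variables at a point of the sphere. -/
def evalPt (P : MvPolynomial (Fin d) ℝ) (x : Sph d) : ℝ :=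
  MvPolynomial.eval (fun i => (x : EuclideanSpace ℝ (Fin d)) i) P

/-- `C` is a spherical `t`-design: averaging any polynomial of total degree at most
`t` over `C` gives its mean over the sphere with respect to the uniform measure. -/
def IsSphDesign (d t : ℕ) (C : Finset (Sph d)) : Prop :=
  C.Nonempty ∧ ∀ P : MvPolynomial (Fin d) ℝ, P.totalDegree ≤ t →
    (∑ x ∈ C, evalPt P x) / (C.card : ℝ) = ∫ x, evalPt P x ∂(sphσ d)

/-- The set `A(C) = {⟨x,y⟩ : x, y ∈ C, x ≠ y}` of inner products between distinct
points of `C`. -/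
def innerProds (C : Finset (Sph d)) : Set ℝ :=
  {t | ∃ x ∈ C, ∃ y ∈ C, x ≠ y ∧
    ⟪(x : EuclideanSpace ℝ (Fin d)), (y : EuclideanSpace ℝ (Fin d))⟫ = t}

/-- `C` is a tight spherical `M`-design: it is a spherical `M`-design, and either
`M = 2m` and `A(C)` has exactly `m` elements, or `M = 2m - 1` and `A(C)` has exactly
`m` elements, one of which is `-1`. -/
def IsTightSphDesign (d M : ℕ) (C : Finset (Sph d)) : Prop :=
  IsSphDesign d M C ∧
    ((∃ m, M = 2 * m ∧ (innerProds C).ncard = m) ∨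
     (∃ m, M + 1 = 2 * m ∧ (innerProds C).ncard = m ∧ (-1 : ℝ) ∈ innerProds C))

/-- A function `h : [-1,1] → ℝ` is positive definite on `S^{d-1}` if all matrices
`(h(⟨x_i, x_j⟩))_{i,j}` arising from points of the sphere are positive semidefinite. -/
def IsPosDefOn (d : ℕ) (h : ℝ → ℝ) : Prop :=
  ∀ (N : ℕ) (x : Fin N → Sph d) (c : Fin N → ℂ),
    0 ≤ (∑ i, ∑ j,
      (h ⟪(x i : EuclideanSpace ℝ (Fin d)), (x j : EuclideanSpace ℝ (Fin d))⟫ : ℂ)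
        * c i * (starRingEnd ℂ) (c j)).re

open Filter Topology
open scoped Pointwise

lemma integral_comp_simpleFunc {X : Type*} [MeasurableSpace X] (φ : SimpleFunc X X) (g : X → ℝ) (μ : Measure X)
    [IsProbabilityMeasure μ] :
    ∫ x, g (φ x) ∂μ = ∑ a ∈ φ.range, μ.real (φ ⁻¹' {a}) * g a := by
  have h1 : ∀ x, g (φ x) = ∑ a ∈ φ.range, (φ ⁻¹' {a}).indicator (fun _ => g a) x := by
    intro x
    rw [Finset.sum_eq_single (φ x)]
    · simp
    · intro b _ hb
      apply Set.indicator_of_notMem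
      simpa using hb.symm
    · intro hx
      exact absurd (φ.mem_range_self x) hx
  simp_rw [h1]
  rw [integral_finsetSum]
  · refine Finset.sum_congr rfl fun a _ => ?_
    rw [integral_indicator_const _ (φ.measurableSet_fiber a), smul_eq_mul]
  · intro a _
    exact (integrable_const _).indicator (φ.measurableSet_fiber a)

section Quadratic

variable {X : Type*} [MetricSpace X] [CompactSpace X] [MeasurableSpace X]

/-- The discretised double integrals converge to the original one. -/
lemma tendsto_integral_discretised {K : X → X → ℝ} (hK : Continuous (Function.uncurry K))
    (φ : ℕ → SimpleFunc X X) (hφ : ∀ x, Tendsto (fun n => φ n x) atTop (𝓝 x))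
    (μ ν : Measure X) [IsProbabilityMeasure μ] [IsProbabilityMeasure ν] :
    Tendsto (fun n => ∫ x, ∫ y, K (φ n x) (φ n y) ∂ν ∂μ) atTop
      (𝓝 (∫ x, ∫ y, K x y ∂ν ∂μ)) := by
  obtain ⟨C, hC⟩ := isCompact_univ.exists_bound_of_continuousOn (f := Function.uncurry K)
    hK.continuousOn
  have hC' : ∀ x y, ‖K x y‖ ≤ C := fun x y => hC (x, y) (Set.mem_univ _)
  refine tendsto_integral_of_dominated_convergence (fun _ => C) ?_ (integrable_const _) ?_ ?_
  · intro n
    have : (fun x => ∫ y, K (φ n x) (φ n y) ∂ν)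
        = ((φ n).map fun a => ∫ y, K a (φ n y) ∂ν) := by ext; rfl
    rw [this]
    exact (SimpleFunc.measurable _).aestronglyMeasurable
  · intro n
    refine Eventually.of_forall fun x => ?_
    simpa using norm_integral_le_of_norm_le_const (μ := ν)
      (Eventually.of_forall fun y => hC' (φ n x) (φ n y))
  · refine Eventually.of_forall fun x => ?_
    refine tendsto_integral_of_dominated_convergence (fun _ => C) ?_ (integrable_const _) ?_ ?_
    · intro n
      exact (((φ n).map fun b => K (φ n x) b).measurable).aestronglyMeasurable
    · intro n
      exact Eventually.of_forall fun y => hC' _ _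
    · refine Eventually.of_forall fun y => ?_
      exact (hK.tendsto (x, y)).comp ((hφ x).prodMk_nhds (hφ y))

/-- A continuous symmetric positive definite kernel gives a nonnegative quadratic form on the
difference of two probability measures. -/
lemma two_mul_integral_le [BorelSpace X] [Nonempty X] {K : X → X → ℝ}
    (hK : Continuous (Function.uncurry K))
    (hsymm : ∀ x y, K x y = K y x)
    (hpos : ∀ (s : Finset X) (c : X → ℝ), 0 ≤ ∑ a ∈ s, ∑ b ∈ s, K a b * c a * c b)
    (μ ν : Measure X) [IsProbabilityMeasure μ] [IsProbabilityMeasure ν] :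
    2 * ∫ x, ∫ y, K x y ∂ν ∂μ ≤ ∫ x, ∫ y, K x y ∂μ ∂μ + ∫ x, ∫ y, K x y ∂ν ∂ν := by
  obtain ⟨x₀⟩ := ‹Nonempty X›
  let φ : ℕ → SimpleFunc X X :=
    SimpleFunc.approxOn id measurable_id Set.univ x₀ (Set.mem_univ _)
  have hφ : ∀ x, Tendsto (fun n => φ n x) atTop (𝓝 x) := fun x =>
    SimpleFunc.tendsto_approxOn measurable_id (Set.mem_univ _) (by simp)
  refine le_of_tendsto_of_tendsto'
    ((tendsto_integral_discretised hK φ hφ μ ν).const_mul 2)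
    ((tendsto_integral_discretised hK φ hφ μ μ).add (tendsto_integral_discretised hK φ hφ ν ν))
    fun n => ?_
  have key : ∀ (α β : Measure X) [IsProbabilityMeasure α] [IsProbabilityMeasure β],
      ∫ x, ∫ y, K (φ n x) (φ n y) ∂β ∂α = ∑ a ∈ (φ n).range, ∑ b ∈ (φ n).range,
        K a b * α.real (φ n ⁻¹' {a}) * β.real (φ n ⁻¹' {b}) := by
    intro α β _ _
    rw [integral_comp_simpleFunc (φ n) (fun a => ∫ y, K a (φ n y) ∂β) α]
    refine Finset.sum_congr rfl fun a _ => ?_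
    rw [integral_comp_simpleFunc (φ n) (fun b => K a b) β, Finset.mul_sum]
    exact Finset.sum_congr rfl fun b _ => by ring
  have hs : ∑ a ∈ (φ n).range, ∑ b ∈ (φ n).range,
        K a b * μ.real (φ n ⁻¹' {a}) * ν.real (φ n ⁻¹' {b})
      = ∑ a ∈ (φ n).range, ∑ b ∈ (φ n).range,
        K a b * ν.real (φ n ⁻¹' {a}) * μ.real (φ n ⁻¹' {b}) := by
    rw [Finset.sum_comm]
    refine Finset.sum_congr rfl fun a _ => Finset.sum_congr rfl fun b _ => ?_
    rw [hsymm b a]; ring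
  have h0 := hpos (φ n).range fun a => μ.real (φ n ⁻¹' {a}) - ν.real (φ n ⁻¹' {a})
  have hexp : ∀ a b, K a b * (μ.real (φ n ⁻¹' {a}) - ν.real (φ n ⁻¹' {a}))
        * (μ.real (φ n ⁻¹' {b}) - ν.real (φ n ⁻¹' {b}))
      = K a b * μ.real (φ n ⁻¹' {a}) * μ.real (φ n ⁻¹' {b})
        - K a b * μ.real (φ n ⁻¹' {a}) * ν.real (φ n ⁻¹' {b})
        - K a b * ν.real (φ n ⁻¹' {a}) * μ.real (φ n ⁻¹' {b})
        + K a b * ν.real (φ n ⁻¹' {a}) * ν.real (φ n ⁻¹' {b}) := fun a b => by ring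
  simp only [hexp, Finset.sum_add_distrib, Finset.sum_sub_distrib] at h0
  rw [key μ ν, key μ μ, key ν ν]
  linarith

end Quadratic

section Sphere

/-- A linear isometry restricted to the unit sphere. -/
def sphMap (R : EuclideanSpace ℝ (Fin d) ≃ₗᵢ[ℝ] EuclideanSpace ℝ (Fin d)) (x : Sph d) : Sph d :=
  ⟨R x, by simp⟩

lemma measurable_sphMap (R : EuclideanSpace ℝ (Fin d) ≃ₗᵢ[ℝ] EuclideanSpace ℝ (Fin d)) :
    Measurable (sphMap R) :=
  (R.continuous.comp continuous_subtype_val).measurable.subtype_mk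

/-- The uniform measure is invariant under linear isometries: the cone over `R⁻¹ s` is the preimage
under `R` of the cone over `s`, and `R` preserves Lebesgue measure. -/
lemma measurePreserving_sphσ
    (R : EuclideanSpace ℝ (Fin d) ≃ₗᵢ[ℝ] EuclideanSpace ℝ (Fin d)) :
    MeasurePreserving (sphMap R) (sphσ d) (sphσ d) := by
  refine ⟨measurable_sphMap R, ?_⟩
  rw [sphσ, Measure.map_smul]
  congr 1
  ext s hs
  rw [Measure.map_apply (measurable_sphMap R) hs, Measure.toSphere_apply' _ hs,
    Measure.toSphere_apply' _ (measurable_sphMap R hs)]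
  congr 1
  have hset : (Set.Ioo (0 : ℝ) 1 • (Subtype.val '' (sphMap R ⁻¹' s)) : Set (EuclideanSpace ℝ (Fin d)))
      = R ⁻¹' (Set.Ioo (0 : ℝ) 1 • (Subtype.val '' s)) := by
    ext v
    simp only [Set.mem_smul, Set.mem_image, Set.mem_preimage]
    constructor
    · rintro ⟨r, hr, _, ⟨x, hx, rfl⟩, rfl⟩
      exact ⟨r, hr, _, ⟨_, hx, rfl⟩, by simp [sphMap]⟩
    · rintro ⟨r, hr, _, ⟨x, hx, rfl⟩, hv⟩
      have hRx : sphMap R (sphMap R.symm x) = x := Subtype.ext (by simp [sphMap])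
      refine ⟨r, hr, _, ⟨sphMap R.symm x, by rw [hRx]; exact hx, rfl⟩, ?_⟩
      apply R.injective
      simpa [sphMap] using hv
  rw [hset]
  exact R.measurePreserving.measure_preimage_equiv (f := R.toMeasurableEquiv) _

lemma isProbabilityMeasure_sphσ (hd : 2 ≤ d) : IsProbabilityMeasure (sphσ d) := by
  have : Nonempty (Fin d) := ⟨⟨0, by omega⟩⟩
  have : Nontrivial (EuclideanSpace ℝ (Fin d)) := inferInstance
  have h0 : (volume : Measure (EuclideanSpace ℝ (Fin d))).toSphere ≠ 0 :=
    Measure.toSphere_ne_zero _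
  constructor
  rw [sphσ, Measure.smul_apply, smul_eq_mul]
  exact ENNReal.inv_mul_cancel (mt Measure.measure_univ_eq_zero.mp h0) (measure_ne_top _ _)

lemma inner_mem_Icc (x y : Sph d) :
    ⟪(x : EuclideanSpace ℝ (Fin d)), (y : EuclideanSpace ℝ (Fin d))⟫ ∈ Set.Icc (-1 : ℝ) 1 := by
  have := abs_real_inner_le_norm (x : EuclideanSpace ℝ (Fin d)) (y : EuclideanSpace ℝ (Fin d))
  simp only [norm_eq_of_mem_sphere, mul_one] at this
  exact abs_le.mp this

lemma continuous_kernel {g : ℝ → ℝ} (hg : ContinuousOn g (Set.Icc (-1) 1)) :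
    Continuous (Function.uncurry fun x y : Sph d =>
      g ⟪(x : EuclideanSpace ℝ (Fin d)), (y : EuclideanSpace ℝ (Fin d))⟫) :=
  hg.comp_continuous (f := fun p : Sph d × Sph d =>
    ⟪(p.1 : EuclideanSpace ℝ (Fin d)), (p.2 : EuclideanSpace ℝ (Fin d))⟫)
    (by fun_prop) fun p => inner_mem_Icc p.1 p.2

/-- The potential of `σ` is constant: the reflection exchanging `x` and `x'` preserves `σ`. -/
lemma potential_const (g : ℝ → ℝ) (x x' : Sph d) :
    ∫ y : Sph d, g ⟪(x : EuclideanSpace ℝ (Fin d)), (y : EuclideanSpace ℝ (Fin d))⟫ ∂(sphσ d)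
      = ∫ y : Sph d, g ⟪(x' : EuclideanSpace ℝ (Fin d)), (y : EuclideanSpace ℝ (Fin d))⟫
          ∂(sphσ d) := by
  let R := (Submodule.span ℝ {(x : EuclideanSpace ℝ (Fin d)) - x'})ᗮ.reflection
  have hR : R x = x' := Submodule.reflection_sub (by simp)
  have hinj : Function.Injective (sphMap R) := fun a b hab =>
    Subtype.ext (R.injective (congrArg Subtype.val hab))
  have hemb : MeasurableEmbedding (sphMap R) :=
    (measurable_sphMap R).measurableEmbedding hinj
  rw [← (measurePreserving_sphσ R).integral_comp hemb
    (fun y => g ⟪(x' : EuclideanSpace ℝ (Fin d)), (y : EuclideanSpace ℝ (Fin d))⟫)]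
  refine integral_congr_ae (Eventually.of_forall fun y => ?_)
  simp only [sphMap, ← hR, R.inner_map_map]

/-- Positive definiteness with real weights on a finite set of points. -/
lemma IsPosDefOn.sum_nonneg {h : ℝ → ℝ} (hpd : IsPosDefOn d h) (s : Finset (Sph d))
    (c : Sph d → ℝ) :
    0 ≤ ∑ a ∈ s, ∑ b ∈ s,
      h ⟪(a : EuclideanSpace ℝ (Fin d)), (b : EuclideanSpace ℝ (Fin d))⟫ * c a * c b := by
  have h0 := hpd s.card (fun i => (s.equivFin.symm i : Sph d))
    (fun i => (c (s.equivFin.symm i : Sph d) : ℂ))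
  have hsum : ∀ F : Sph d → ℝ, ∑ a ∈ s, F a = ∑ i, F (s.equivFin.symm i : Sph d) := fun F => by
    rw [← Finset.sum_coe_sort s F]
    exact (Equiv.sum_comp s.equivFin.symm fun a : s => F a).symm
  simp only [hsum]
  simp only [Complex.conj_ofReal] at h0
  exact_mod_cast h0

lemma energy_mono {f h : ℝ → ℝ}
    (hf : ContinuousOn f (Set.Icc (-1) 1)) (hh : ContinuousOn h (Set.Icc (-1) 1))
    (hle : ∀ t ∈ Set.Icc (-1 : ℝ) 1, h t ≤ f t)
    (μ : Measure (Sph d)) [IsProbabilityMeasure μ] : energy h μ ≤ energy f μ := by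
  have hint : ∀ {g : ℝ → ℝ}, ContinuousOn g (Set.Icc (-1) 1) →
      Integrable (Function.uncurry fun x y : Sph d =>
        g ⟪(x : EuclideanSpace ℝ (Fin d)), (y : EuclideanSpace ℝ (Fin d))⟫) (μ.prod μ) :=
    fun hg => (continuous_kernel hg).integrable_of_hasCompactSupport
      (HasCompactSupport.of_compactSpace _)
  have hint' : ∀ {g : ℝ → ℝ}, ContinuousOn g (Set.Icc (-1) 1) → ∀ x : Sph d,
      Integrable (fun y : Sph d =>
        g ⟪(x : EuclideanSpace ℝ (Fin d)), (y : EuclideanSpace ℝ (Fin d))⟫) μ :=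
    fun hg x => ((continuous_kernel hg).comp (Continuous.prodMk_right x)
      ).integrable_of_hasCompactSupport (HasCompactSupport.of_compactSpace _)
  exact integral_mono (hint hh).integral_prod_left (hint hf).integral_prod_left fun x =>
    integral_mono (hint' hh x) (hint' hf x) fun y => hle _ (inner_mem_Icc x y)

end Sphere

/-- linear programming bound, part (i). If `h ≤ f` on `[-1,1]` and `h`
is continuous and positive definite on `S^{d-1}`, then for every Borel probability
measure `μ` on `S^{d-1}`, `I_f(μ) ≥ ∫∫ h(⟨x,y⟩) dσ dσ`. -/
theorem lp_bound_posdef_minorant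
    {d : ℕ} (hd : 2 ≤ d) (f h : ℝ → ℝ)
    (hf : ContinuousOn f (Set.Icc (-1) 1)) (hh : ContinuousOn h (Set.Icc (-1) 1))
    (hpd : IsPosDefOn d h) (hle : ∀ t ∈ Set.Icc (-1 : ℝ) 1, h t ≤ f t)
    (μ : Measure (Sph d)) [IsProbabilityMeasure μ] :
    energy h (sphσ d) ≤ energy f μ := by
  have := isProbabilityMeasure_sphσ hd
  have hne : Nonempty (Sph d) := nonempty_of_isProbabilityMeasure μ
  obtain ⟨x₀⟩ := id hne
  have hquad := two_mul_integral_le (continuous_kernel (d := d) hh)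
    (fun x y => by rw [real_inner_comm]) hpd.sum_nonneg μ (sphσ d)
  have hμσ : ∀ (ν : Measure (Sph d)) [IsProbabilityMeasure ν],
      ∫ x : Sph d, ∫ y : Sph d,
        h ⟪(x : EuclideanSpace ℝ (Fin d)), (y : EuclideanSpace ℝ (Fin d))⟫ ∂(sphσ d) ∂ν
      = ∫ y : Sph d, h ⟪(x₀ : EuclideanSpace ℝ (Fin d)), (y : EuclideanSpace ℝ (Fin d))⟫
          ∂(sphσ d) := fun ν _ => by
    simp_rw [fun x => potential_const h x x₀]
    simp
  refine le_trans ?_ (energy_mono hf hh hle μ)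
  rw [hμσ μ, hμσ (sphσ d)] at hquad
  rw [energy, hμσ (sphσ d), energy]
  linarith
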